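/- arXiv:2604.06047 — 2 statements merged into one kernel-verified Lean document; each statement's English description precedes it below -/
import Mathlib

section
/- For a greedy run with any (deterministic) binary reward schedules and any initial counts (S_1(0), S_2(0)), the smaller of the two empirical means never exceeds its initial value: for all t ≥ 0, min{μ̂_1(t), μ̂_2(t)} ≤ min{S_1(0), S_2(0)} / N_0. -/
/-!
The greedy rule pulls an arm of maximal empirical mean, so the arm left alone attains the
minimum of the two means. Its mean is unchanged by the step, hence bounds the new minimum:
the smaller empirical mean is nonincreasing in time (`Bandit.min_muHat_succ_le`). Induction
down to `t = 0`, where it equals `min (S 0) (S 1) / N0`, gives the bound.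
-/

open MeasureTheory ProbabilityTheory Filter

namespace Bandit

/-- Empirical mean of arm `j` for a two-armed binary bandit, given `N0` initial samples
per arm of which `S j` were successes, reward schedule `x` (where `x j n` is the reward
the `n`-th time arm `j` is pulled, `n = 0, 1, …`), when arm `j` has been pulled `c j`
times so far. -/
noncomputable def empMean (N0 : ℕ) (S : Fin 2 → ℕ) (x : Fin 2 → ℕ → Bool)
    (c : Fin 2 → ℕ) (j : Fin 2) : ℝ :=
  ((S j : ℝ) + (((Finset.range (c j)).filter (fun n => x j n = true)).card : ℝ)) /
    ((N0 : ℝ) + (c j : ℝ))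

/-- The arm the greedy algorithm pulls next given current pull counts `c`: the arm with
the highest empirical mean, ties broken by a fixed deterministic rule (in favor of
arm `0`, the better arm). -/
noncomputable def chooseArm (N0 : ℕ) (S : Fin 2 → ℕ) (x : Fin 2 → ℕ → Bool)
    (c : Fin 2 → ℕ) : Fin 2 :=
  if empMean N0 S x c 0 < empMean N0 S x c 1 then 1 else 0

/-- `counts N0 S x t j` is the number of times arm `j` has been pulled by the greedy
algorithm up to and including time `t` (times are `t = 1, 2, …`). -/
noncomputable def counts (N0 : ℕ) (S : Fin 2 → ℕ) (x : Fin 2 → ℕ → Bool) :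
    ℕ → Fin 2 → ℕ
  | 0 => fun _ => 0
  | t + 1 =>
    let c := counts N0 S x t
    let a := chooseArm N0 S x c
    Function.update c a (c a + 1)

/-- `arm N0 S x t` is the arm `A_t` pulled by the greedy algorithm at time `t ≥ 1`. -/
noncomputable def arm (N0 : ℕ) (S : Fin 2 → ℕ) (x : Fin 2 → ℕ → Bool) (t : ℕ) : Fin 2 :=
  chooseArm N0 S x (counts N0 S x (t - 1))

/-- `muHat N0 S x t j` is the empirical mean `μ̂_j(t)` of arm `j` at time `t`. -/
noncomputable def muHat (N0 : ℕ) (S : Fin 2 → ℕ) (x : Fin 2 → ℕ → Bool) (t : ℕ)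
    (j : Fin 2) : ℝ :=
  empMean N0 S x (counts N0 S x t) j

/-- The greedy run locks in at time `t`: `t ≥ 1` and the same arm is pulled at every
time `t' ≥ t`. (The lock-in time `L` is the least such `t`; since the pulled arm is
constant from any such `t` on, `A_L = j` iff `arm t = j` for some lock-in time `t`.) -/
def locksAt (N0 : ℕ) (S : Fin 2 → ℕ) (x : Fin 2 → ℕ → Bool) (t : ℕ) : Prop :=
  1 ≤ t ∧ ∀ t' ≥ t, arm N0 S x t' = arm N0 S x t

/-- Wrong lock-in `W`: the run locks in (`L < ∞`) and the locked-in arm `A_L` is the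
inferior arm (index `1` here, i.e. arm 2 of the paper). -/
def wrongLockIn (N0 : ℕ) (S : Fin 2 → ℕ) (x : Fin 2 → ℕ → Bool) : Prop :=
  ∃ t, locksAt N0 S x t ∧ arm N0 S x t = 1

/-- `W(t)`: the run locks in to the inferior arm before time `t/2`. -/
def wrongLockInBy (N0 : ℕ) (S : Fin 2 → ℕ) (x : Fin 2 → ℕ → Bool) (t : ℕ) : Prop :=
  ∃ s, locksAt N0 S x s ∧ 2 * s < t ∧ arm N0 S x s = 1

/-- `R(t)`: the run locks in to the better arm (index `0`, arm 1 of the paper) before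
time `t/2`. -/
def rightLockInBy (N0 : ℕ) (S : Fin 2 → ℕ) (x : Fin 2 → ℕ → Bool) (t : ℕ) : Prop :=
  ∃ s, locksAt N0 S x s ∧ 2 * s < t ∧ arm N0 S x s = 0

/-- Pooled empirical mean `μ̂_j^all(t)` of arm `j` at time `t` across `k` independent
greedy runs with shared initial history and reward schedules `xs 0, …, xs (k-1)`. -/
noncomputable def muHatAll (N0 : ℕ) (S : Fin 2 → ℕ) {k : ℕ}
    (xs : Fin k → Fin 2 → ℕ → Bool) (t : ℕ) (j : Fin 2) : ℝ :=
  ((S j : ℝ) + ∑ i : Fin k,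
      (((Finset.range (counts N0 (S) (xs i) t j)).filter
        (fun n => xs i j n = true)).card : ℝ)) /
    ((N0 : ℝ) + ∑ i : Fin k, (counts N0 S (xs i) t j : ℝ))

/-- `F_poly(t)`: the pooled data of the `k` runs misidentify the best arm at time `t`,
i.e. `μ̂_2^all(t) > μ̂_1^all(t)`. -/
def polyFails (N0 : ℕ) (S : Fin 2 → ℕ) {k : ℕ} (xs : Fin k → Fin 2 → ℕ → Bool)
    (t : ℕ) : Prop :=
  muHatAll N0 S xs t 0 < muHatAll N0 S xs t 1

/-- `F_mono(t)`: a single greedy run misidentifies the best arm at time `t`,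
i.e. `μ̂_2(t) > μ̂_1(t)`. -/
def monoFails (N0 : ℕ) (S : Fin 2 → ℕ) (x : Fin 2 → ℕ → Bool) (t : ℕ) : Prop :=
  muHat N0 S x t 0 < muHat N0 S x t 1

end Bandit

namespace Bandit

/-- The empirical mean of an arm depends only on that arm's own pull count. -/
theorem empMean_congr (N0 : ℕ) (S : Fin 2 → ℕ) (x : Fin 2 → ℕ → Bool)
    {c d : Fin 2 → ℕ} {j : Fin 2} (h : c j = d j) :
    empMean N0 S x c j = empMean N0 S x d j := by
  simp only [empMean, h]

/-- One greedy step does not raise the smaller empirical mean: the arm that is not pulled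
attains the minimum and keeps its mean. -/
theorem min_muHat_succ_le (N0 : ℕ) (S : Fin 2 → ℕ) (x : Fin 2 → ℕ → Bool) (t : ℕ) :
    min (muHat N0 S x (t + 1) 0) (muHat N0 S x (t + 1) 1) ≤
      min (muHat N0 S x t 0) (muHat N0 S x t 1) := by
  by_cases h : muHat N0 S x t 0 < muHat N0 S x t 1
  · have h0 : muHat N0 S x (t + 1) 0 = muHat N0 S x t 0 := by
      apply empMean_congr
      simp [counts, chooseArm, if_pos (show empMean N0 S x _ 0 < empMean N0 S x _ 1 from h)]
    rw [min_eq_left h.le, ← h0]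
    exact min_le_left _ _
  · have h1 : muHat N0 S x (t + 1) 1 = muHat N0 S x t 1 := by
      apply empMean_congr
      simp [counts, chooseArm, if_neg (show ¬ empMean N0 S x _ 0 < empMean N0 S x _ 1 from h)]
    rw [min_eq_right (not_lt.mp h), ← h1]
    exact min_le_right _ _

end Bandit

/-- **Lemma (greedy never raises the smaller empirical mean).** For a greedy run with
any deterministic binary reward schedules `x` and any initial history (`N0 ≥ 1`
samples per arm, of which `S j ∈ {0, …, N0}` are ones on arm `j`), at every time
`t ≥ 0` the smaller of the two empirical means never exceeds its initial value:
`min(μ̂_1(t), μ̂_2(t)) ≤ min(S_1(0), S_2(0)) / N0`. -/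
theorem greedy_min_empMean_le_initial
    (N0 : ℕ) (hN0 : 1 ≤ N0) (S : Fin 2 → ℕ) (hS : ∀ j, S j ≤ N0)
    (x : Fin 2 → ℕ → Bool) (t : ℕ) :
    min (Bandit.muHat N0 S x t 0) (Bandit.muHat N0 S x t 1) ≤
      (min (S 0) (S 1) : ℝ) / (N0 : ℝ) := by
  induction t with
  | zero =>
    simp only [Bandit.muHat, Bandit.empMean, Bandit.counts, Finset.range_zero,
      Finset.filter_empty, Finset.card_empty, Nat.cast_zero, add_zero]
    rw [min_div_div_right (Nat.cast_nonneg N0)]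
  | succ t ih => exact (Bandit.min_muHat_succ_le N0 S x t).trans ih
end

section
/- Consider n candidates and m < n firms, where each firm's ranking of the candidates is an independent uniformly random permutation of the n candidates (algorithmic polyculture behind a veil of ignorance) and firms hire in a fixed sequence, each hiring the top-ranked candidate, according to its own ranking, among those not yet hired. Then the set of n − m candidates left jobless is uniformly distributed over all (n − m)-element subsets of the candidates; in particular, any fixed set of n − m candidates is left jobless with probability 1 / C(n, n − m), the same probability as under monoculture. -/
/-! The argument is by symmetry. Relabelling the candidates by a permutation `σ`, i.e. replacing
each ranking `R i` by `R i ∘ σ⁻¹`, is a bijection on tuples of rankings, and the hiring process is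
equivariant under it: the jobless set is relabelled by `σ` (`jobless_relabel`). Since permutations
act transitively on subsets of a given size, every `(n - m)`-subset is the jobless set of equally
many tuples (`card_fiber_eq`). Every firm finds a candidate to hire, so the jobless set always has
exactly `n - m` elements (`card_jobless`), and the `C(n, n - m)` equal fibers partition the set of
all tuples. -/

open scoped Classical

/-- Sequential greedy hiring: there are `n` candidates and `m` firms; firm `i`
(`i = 0, …, m-1`, moving in this order) has ranking `R i`, a permutation of the
candidates where `R i c` is the rank of candidate `c` (lower is better), and hires
the top-ranked candidate (according to `R i`) among those not yet hired.
`hired n m R i` is the set of candidates hired by the first `i` firms. -/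
noncomputable def hired (n m : ℕ) (R : Fin m → Equiv.Perm (Fin n)) : ℕ → Finset (Fin n)
  | 0 => ∅
  | i + 1 =>
    if h : i < m then
      let prev := hired n m R i
      let remaining := Finset.univ \ prev
      if hne : remaining.Nonempty then
        insert ((R ⟨i, h⟩).symm ((remaining.image (R ⟨i, h⟩)).min' (hne.image _))) prev
      else prev
    else hired n m R i

/-- The set of candidates left jobless after all `m` firms have hired. -/
noncomputable def jobless (n m : ℕ) (R : Fin m → Equiv.Perm (Fin n)) : Finset (Fin n) :=
  Finset.univ \ hired n m R m

/-- Relabelling the candidates by `σ` in every ranking, as a bijection on tuples of rankings: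
candidate `σ c` receives the rank that `c` had. -/
def relabel (n m : ℕ) (σ : Equiv.Perm (Fin n)) :
    (Fin m → Equiv.Perm (Fin n)) ≃ (Fin m → Equiv.Perm (Fin n)) where
  toFun R i := σ.symm.trans (R i)
  invFun R i := σ.trans (R i)
  left_inv R := by ext; simp
  right_inv R := by ext; simp

lemma univ_sdiff_image {n : ℕ} (σ : Equiv.Perm (Fin n)) (t : Finset (Fin n)) :
    Finset.univ \ t.image σ = (Finset.univ \ t).image σ := by
  rw [Finset.image_sdiff _ _ σ.injective, Finset.image_univ_equiv]

lemma hired_relabel (n m : ℕ) (σ : Equiv.Perm (Fin n)) (R : Fin m → Equiv.Perm (Fin n)) (k : ℕ) :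
    hired n m (relabel n m σ R) k = (hired n m R k).image σ := by
  induction k with
  | zero => simp [hired]
  | succ k ih =>
    by_cases h : k < m
    · have hrem := univ_sdiff_image σ (hired n m R k)
      -- The ranks occupied by the remaining candidates do not change under relabelling.
      have hranks : ((Finset.univ \ hired n m R k).image σ).image (relabel n m σ R ⟨k, h⟩)
          = (Finset.univ \ hired n m R k).image (R ⟨k, h⟩) := by
        rw [Finset.image_image]
        congr 1
        ext c
        simp [relabel]
      by_cases hne : (Finset.univ \ hired n m R k).Nonempty
      · simp only [hired, h, dite_true, ih, hrem, hne, Finset.image_nonempty, hranks,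
          Finset.image_insert]
        simp [relabel]
      · simp only [hired, h, dite_true, ih, hrem, hne, Finset.image_nonempty, dite_false]
    · simp only [hired, h, dite_false, ih]

lemma jobless_relabel (n m : ℕ) (σ : Equiv.Perm (Fin n)) (R : Fin m → Equiv.Perm (Fin n)) :
    jobless n m (relabel n m σ R) = (jobless n m R).image σ := by
  rw [jobless, hired_relabel, univ_sdiff_image, jobless]

lemma card_hired {n m : ℕ} (hmn : m < n) (R : Fin m → Equiv.Perm (Fin n)) {k : ℕ} (hk : k ≤ m) :
    (hired n m R k).card = k := by
  induction k with
  | zero => simp [hired]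
  | succ k ih =>
    have h : k < m := hk
    have ih := ih h.le
    have hne : (Finset.univ \ hired n m R k).Nonempty := by
      rw [← Finset.card_pos, Finset.card_univ_sdiff, ih, Fintype.card_fin]
      omega
    simp only [hired, h, dite_true, hne]
    rw [Finset.card_insert_of_notMem, ih]
    obtain ⟨c, hc, hcr⟩ := Finset.mem_image.mp
      (Finset.min'_mem ((Finset.univ \ hired n m R k).image (R ⟨k, h⟩)) (hne.image _))
    rw [← hcr, Equiv.symm_apply_apply]
    exact (Finset.mem_sdiff.mp hc).2

lemma card_jobless {n m : ℕ} (hmn : m < n) (R : Fin m → Equiv.Perm (Fin n)) :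
    (jobless n m R).card = n - m := by
  rw [jobless, Finset.card_univ_sdiff, card_hired hmn R le_rfl, Fintype.card_fin]

lemma exists_perm_image_eq {n : ℕ} {s t : Finset (Fin n)} (h : s.card = t.card) :
    ∃ σ : Equiv.Perm (Fin n), s.image σ = t := by
  let e : {x // x ∈ s} ≃ {x // x ∈ t} := Finset.equivOfCardEq h
  refine ⟨e.extendSubtype, Finset.eq_of_subset_of_card_le ?_ ?_⟩
  · intro x hx
    obtain ⟨y, hy, rfl⟩ := Finset.mem_image.mp hx
    exact e.extendSubtype_mem y hy
  · rw [Finset.card_image_of_injective _ (Equiv.injective _), h]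

lemma card_fiber_eq (n m : ℕ) {s t : Finset (Fin n)} (h : s.card = t.card) :
    (Finset.univ.filter (fun R : Fin m → Equiv.Perm (Fin n) => jobless n m R = s)).card =
      (Finset.univ.filter (fun R : Fin m → Equiv.Perm (Fin n) => jobless n m R = t)).card := by
  obtain ⟨σ, rfl⟩ := exists_perm_image_eq h
  refine Finset.card_equiv (relabel n m σ) fun R => ?_
  simp only [Finset.mem_filter, Finset.mem_univ, true_and, jobless_relabel]
  exact (Finset.image_injective σ.injective).eq_iff.symm

/-- **Polyculture behind a veil of ignorance.** With `n` candidates and `m < n` firms,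
each firm's ranking being an independent uniformly random permutation of the
candidates (i.e. the tuple of rankings is uniform over all `m`-tuples of
permutations), and firms hiring in a fixed sequence, the set of `n - m` jobless
candidates is uniformly distributed over all `(n-m)`-element subsets: every fixed
set `s` of `n - m` candidates is left jobless with probability `1 / C(n, n-m)`,
the same probability as under monoculture. -/
theorem polyculture_jobless_uniform (n m : ℕ) (hmn : m < n)
    (s : Finset (Fin n)) (hs : s.card = n - m) :
    ((Finset.univ.filter
        (fun R : Fin m → Equiv.Perm (Fin n) => jobless n m R = s)).card : ℝ) /
      (Fintype.card (Fin m → Equiv.Perm (Fin n)) : ℝ)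
      = 1 / (n.choose (n - m) : ℝ) := by
  -- The fibers of `jobless` over the `(n - m)`-subsets partition all tuples of rankings.
  have htotal : Fintype.card (Fin m → Equiv.Perm (Fin n)) = n.choose (n - m) *
      (Finset.univ.filter (fun R : Fin m → Equiv.Perm (Fin n) => jobless n m R = s)).card := by
    rw [← Finset.card_univ, Finset.card_eq_sum_card_fiberwise (f := jobless n m)
      (t := Finset.powersetCard (n - m) Finset.univ)
      (fun R _ => by simp [Finset.mem_powersetCard, card_jobless hmn R])]
    rw [Finset.sum_congr rfl (fun t ht =>
      card_fiber_eq n m ((Finset.mem_powersetCard.mp ht).2.trans hs.symm))]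
    simp
  have hpos : 0 < Fintype.card (Fin m → Equiv.Perm (Fin n)) := Fintype.card_pos
  have hfib := Nat.pos_of_mul_pos_left (htotal ▸ hpos)
  have hchoose : 0 < n.choose (n - m) := Nat.choose_pos (Nat.sub_le n m)
  rw [htotal]
  push_cast
  field_simp
end
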